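/- Let J ⊆ T with |J| ≥ 2. Then for all s with Re(s_{ij}) > 0 for all i,j ∈ J, L₀(s;J) = Σ_{ā∈R(J)} |Ā(ā)| · p^{−|J| − Σ_{(i,j)∈K(ā)} s_{ij}} · L₁(s; K_list(ā), K(ā)) + |Δ̄(J)| · p^{−|J|}, where R(J) is a set of representatives of the equivalence classes Ā(ā) of the relation ā ∼ b̄ ⟺ K(ā) = K(b̄) on (𝔽_p^×)^{|J|} ∖ Δ̄(J). -/

import Mathlib

open MeasureTheory Finset

noncomputable section

instance padicMS (p : ℕ) [Fact p.Prime] : MeasurableSpace ℚ_[p] := borel _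
instance padicBS (p : ℕ) [Fact p.Prime] : BorelSpace ℚ_[p] := ⟨rfl⟩

/-- The closed unit ball of `ℚ_[p]` (i.e. `ℤ_[p]`) as a positive compact subset. -/
def padicBall (p : ℕ) [Fact p.Prime] : TopologicalSpace.PositiveCompacts ℚ_[p] where
  carrier := Metric.closedBall 0 1
  isCompact' := isCompact_closedBall 0 1
  interior_nonempty' := ⟨0, Metric.ball_subset_interior_closedBall (Metric.mem_ball_self one_pos)⟩

/-- The Haar measure on `(ℚ_[p], +)`, normalized so that `ℤ_[p]` has measure `1`. -/
def padicHaar (p : ℕ) [Fact p.Prime] : Measure ℚ_[p] :=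
  Measure.addHaarMeasure (padicBall p)

instance padicHaarSF (p : ℕ) [Fact p.Prime] : SigmaFinite (padicHaar p) := by
  unfold padicHaar; infer_instance

/-- The product of normalized Haar measures on a finite power of `ℚ_[p]`. -/
def padicPi (p : ℕ) [Fact p.Prime] (ι : Type) [Fintype ι] : Measure (ι → ℚ_[p]) :=
  Measure.pi fun _ => padicHaar p

/-- `T = {2, …, N-2}`. -/
def Tset (N : ℕ) : Finset ℕ := Finset.Icc 2 (N - 2)

/-- The ordered pairs `(i, j)` with `i < j` and `i, j ∈ A`. -/
def pairsIn (A : Finset ℕ) : Finset (ℕ × ℕ) := (A ×ˢ A).filter fun q => q.1 < q.2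

/-- The coordinates of a point of `ℚ_p^A`, as a function on `ℕ` (junk value `0` off `A`). -/
def padicCoord {p : ℕ} [Fact p.Prime] {A : Finset ℕ} (x : A → ℚ_[p]) (n : ℕ) : ℚ_[p] :=
  if h : n ∈ A then x ⟨n, h⟩ else 0

/-- The set of indices occurring in a set of pairs. -/
def Klist (K : Finset (ℕ × ℕ)) : Finset ℕ := K.image Prod.fst ∪ K.image Prod.snd

/-- `K(b̄) = {(i,j) ∈ T_J : b̄_i = b̄_j}` for a vector `b̄ ∈ 𝔽_p^J`. -/
def KofV (p : ℕ) (J : Finset ℕ) (b : J → ZMod p) : Finset (ℕ × ℕ) :=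
  (pairsIn J).filter fun q =>
    (if h : q.1 ∈ J then b ⟨q.1, h⟩ else 0) = if h : q.2 ∈ J then b ⟨q.2, h⟩ else 0

/-- `L₀(s; J) = ∫_{(ℤ_p^×)^{|J|}} ∏_{i<j ∈ J} |x_i - x_j|^{s_{ij}} ∏ dx_i`. -/
def L0val (p : ℕ) [Fact p.Prime] (s : ℕ → ℕ → ℂ) (J : Finset ℕ) : ℂ :=
  ∫ x in {x : ↥J → ℚ_[p] | (∀ i, ‖x i‖ = 1) ∧
      ∀ q ∈ pairsIn J, padicCoord x q.1 ≠ padicCoord x q.2},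
    ∏ q ∈ pairsIn J, (‖padicCoord x q.1 - padicCoord x q.2‖ : ℂ) ^ s q.1 q.2
    ∂(padicPi p ↥J)

/-- `L₁(s; J, K) = ∫_{ℤ_p^{|J|}} ∏_{(i,j) ∈ K} |x_i - x_j|^{s_{ij}} ∏ dx_i`. -/
def L1val (p : ℕ) [Fact p.Prime] (s : ℕ → ℕ → ℂ) (J : Finset ℕ)
    (K : Finset (ℕ × ℕ)) : ℂ :=
  ∫ x in {x : ↥J → ℚ_[p] | (∀ i, ‖x i‖ ≤ 1) ∧
      ∀ q ∈ K, padicCoord x q.1 ≠ padicCoord x q.2},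
    ∏ q ∈ K, (‖padicCoord x q.1 - padicCoord x q.2‖ : ℂ) ^ s q.1 q.2
    ∂(padicPi p ↥J)

/-!
Reduction mod `p` splits the unit torus into disjoint residue polydiscs `b + p ℤ_p^J`, one for each
`b ∈ (𝔽_p^×)^J`. On such a polydisc `|x_i - x_j| = 1` whenever `b_i ≠ b_j`, and the chart
`x = b + p y` turns `|x_i - x_j|` into `p⁻¹ |y_i - y_j|` whenever `b_i = b_j`, while it scales Haar
measure by `p^{-|J|}`. The coordinates of `y` outside `K_list(b)` then integrate to `1`, so that the
contribution of `b` depends on `K(b)` only; for `b` injective, `K(b)` is empty and `L₁ = 1`.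
-/

theorem dist_eq_of_mem_ball_of_le_dist {X : Type*} [PseudoMetricSpace X] [IsUltrametricDist X]
    {a b x y : X} {r : ℝ} (hx : x ∈ Metric.ball a r) (hy : y ∈ Metric.ball b r)
    (hab : r ≤ dist a b) : dist x y = dist a b := by
  have hxa : dist x a < dist a b := hx.trans_le hab
  have hby : dist b y < dist a b := (Metric.mem_ball'.mp hy).trans_le hab
  have hxb : dist x b = dist a b := by
    rw [IsUltrametricDist.dist_eq_max_of_dist_ne_dist x a b hxa.ne, max_eq_right hxa.le]
  rw [IsUltrametricDist.dist_eq_max_of_dist_ne_dist x b y (hxb ▸ hby.ne'), hxb,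
    max_eq_left hby.le]

theorem sum_comp_eq_sum_representatives {α β M : Type*} [DecidableEq β] [AddCommMonoid M]
    {S R : Finset α} {k : α → β} (hRS : R ⊆ S) (hR : ∀ b ∈ S, ∃! r, r ∈ R ∧ k r = k b)
    (g : β → M) : ∑ b ∈ S, g (k b) = ∑ a ∈ R, #{b ∈ S | k b = k a} • g (k a) := by
  have hinj : Set.InjOn k R := fun r hr r' hr' h =>
    (hR r' (hRS hr')).unique ⟨hr, h⟩ ⟨hr', rfl⟩
  have himage : S.image k = R.image k := by
    refine (image_subset_iff.mpr fun b hb => ?_).antisymm (image_subset_image hRS)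
    obtain ⟨r, ⟨hr, hrb⟩, -⟩ := hR b hb
    exact mem_image.mpr ⟨r, hr, hrb⟩
  rw [sum_comp, himage, sum_image hinj]

section Residue

variable {p : ℕ} [Fact p.Prime]

theorem dist_val_val_of_ne {a b : ZMod p} (h : a ≠ b) :
    dist (a.val : ℚ_[p]) (b.val : ℚ_[p]) = 1 := by
  have hcast : (a.val : ℚ_[p]) - b.val = ((a.val - b.val : ℤ) : ℚ_[p]) := by push_cast; rfl
  rw [dist_eq_norm, hcast]
  refine (Padic.norm_int_le_one _).antisymm (not_lt.mp fun hlt => h ?_)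
  rw [Padic.norm_intCast_lt_one_iff, ← ZMod.intCast_zmod_eq_zero_iff_dvd] at hlt
  simpa [sub_eq_zero] using hlt

theorem norm_sub_eq_one_of_mem_ball_val {a b : ZMod p} (h : a ≠ b) {x y : ℚ_[p]}
    (hx : x ∈ Metric.ball (a.val : ℚ_[p]) 1) (hy : y ∈ Metric.ball (b.val : ℚ_[p]) 1) :
    ‖x - y‖ = 1 := by
  rw [← dist_eq_norm, dist_eq_of_mem_ball_of_le_dist hx hy (dist_val_val_of_ne h).ge,
    dist_val_val_of_ne h]

theorem exists_mem_ball_val_iff_norm_le_one {x : ℚ_[p]} :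
    (∃ a : ZMod p, x ∈ Metric.ball (a.val : ℚ_[p]) 1) ↔ ‖x‖ ≤ 1 := by
  constructor
  · rintro ⟨a, hx⟩
    have ha : (a.val : ℚ_[p]) ∈ Metric.closedBall 0 1 := by
      simpa using Padic.norm_int_le_one (p := p) a.val
    rw [← mem_closedBall_zero_iff, IsUltrametricDist.closedBall_eq_of_mem ha]
    exact Metric.ball_subset_closedBall hx
  · intro hx
    let z : ℤ_[p] := ⟨x, hx⟩
    refine ⟨z.zmodRepr, ?_⟩
    rw [ZMod.val_cast_of_lt z.zmodRepr_lt_p, mem_ball_iff_norm]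
    simpa [PadicInt.norm_def] using z.norm_sub_zmodRepr_lt_one

theorem norm_eq_one_iff_of_mem_ball_val {a : ZMod p} {x : ℚ_[p]}
    (hx : x ∈ Metric.ball (a.val : ℚ_[p]) 1) : ‖x‖ = 1 ↔ a ≠ 0 := by
  constructor
  · rintro h rfl
    simp [h] at hx
  · intro h
    simpa using norm_sub_eq_one_of_mem_ball_val h hx
      (show (0 : ℚ_[p]) ∈ Metric.ball ((0 : ZMod p).val : ℚ_[p]) 1 by simp)

theorem norm_prime_mul_lt_one_iff {y : ℚ_[p]} : ‖(p : ℚ_[p]) * y‖ < 1 ↔ ‖y‖ ≤ 1 := by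
  have hp : (0 : ℝ) < p := by exact_mod_cast (Fact.out : p.Prime).pos
  have h := Padic.norm_le_pow_iff_norm_lt_pow_add_one y 0
  rw [zpow_zero, zero_add, zpow_one] at h
  rw [h, norm_mul, Padic.norm_p, inv_mul_lt_iff₀ hp, mul_one]

variable {ι : Type*}

/-- The lift of a vector `b ∈ 𝔽_p^ι` to `ℤ_p^ι` with coordinates in `{0, …, p - 1}`; the residue
class of `b` is the open unit ball around it for the sup norm. -/
def residueLift (b : ι → ZMod p) : ι → ℚ_[p] := fun i => ((b i).val : ℚ_[p])

/-- The group `(ℤ_p^×)^ι` inside `ℚ_p^ι`. -/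
def unitTorus (p : ℕ) [Fact p.Prime] (ι : Type*) : Set (ι → ℚ_[p]) := {x | ∀ i, ‖x i‖ = 1}

variable [Fintype ι]

theorem unitTorus_subset_closedBall : unitTorus p ι ⊆ Metric.closedBall 0 1 := fun _ hx =>
  mem_closedBall_zero_iff.mpr ((pi_norm_le_iff_of_nonneg zero_le_one).mpr fun i => (hx i).le)

theorem mem_ball_residueLift {b : ι → ZMod p} {x : ι → ℚ_[p]} :
    x ∈ Metric.ball (residueLift b) 1 ↔ ∀ i, x i ∈ Metric.ball ((b i).val : ℚ_[p]) 1 := by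
  simp [ball_pi, residueLift]

theorem closedBall_eq_iUnion_ball_residueLift :
    Metric.closedBall (0 : ι → ℚ_[p]) 1 = ⋃ b : ι → ZMod p, Metric.ball (residueLift b) 1 := by
  ext x
  simp only [mem_closedBall_zero_iff, pi_norm_le_iff_of_nonneg zero_le_one, Set.mem_iUnion,
    mem_ball_residueLift, ← exists_mem_ball_val_iff_norm_le_one]
  exact Classical.skolem

theorem unitTorus_eq_biUnion_ball_residueLift [DecidableEq ι] :
    unitTorus p ι =
      ⋃ b ∈ ({b | ∀ i, b i ≠ 0} : Finset (ι → ZMod p)), Metric.ball (residueLift b) 1 := by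
  ext x
  simp only [mem_filter_univ, Set.mem_iUnion, exists_prop, unitTorus, Set.mem_ofPred_eq]
  constructor
  · intro hx
    choose b hb using fun i => exists_mem_ball_val_iff_norm_le_one.mpr (hx i).le
    exact ⟨b, fun i => (norm_eq_one_iff_of_mem_ball_val (hb i)).mp (hx i),
      mem_ball_residueLift.mpr hb⟩
  · rintro ⟨b, hb, hx⟩ i
    exact (norm_eq_one_iff_of_mem_ball_val (mem_ball_residueLift.mp hx i)).mpr (hb i)

theorem pairwise_disjoint_ball_residueLift :
    Pairwise (Function.onFun Disjoint
      fun b : ι → ZMod p => Metric.ball (residueLift b : ι → ℚ_[p]) 1) := by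
  intro a b hab
  obtain ⟨i, hi⟩ := Function.ne_iff.mp hab
  refine Set.disjoint_left.mpr fun x hxa hxb => ?_
  simpa using norm_sub_eq_one_of_mem_ball_val hi (mem_ball_residueLift.mp hxa i)
    (mem_ball_residueLift.mp hxb i)

theorem add_prime_smul_mem_ball_iff {v y : ι → ℚ_[p]} :
    v + (p : ℚ_[p]) • y ∈ Metric.ball v 1 ↔ y ∈ Metric.closedBall 0 1 := by
  rw [mem_ball_iff_norm, add_sub_cancel_left, mem_closedBall_zero_iff, pi_norm_lt_iff one_pos,
    pi_norm_le_iff_of_nonneg zero_le_one]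
  exact forall_congr' fun _ => norm_prime_mul_lt_one_iff

end Residue

section Haar

variable {p : ℕ} [Fact p.Prime] {ι : Type*} [Fintype ι]
variable (μ : Measure (ι → ℚ_[p])) [μ.IsAddHaarMeasure]

theorem addHaar_closedBall_one_eq_mul_ball_one :
    μ (Metric.closedBall 0 1) = (p : ENNReal) ^ Fintype.card ι * μ (Metric.ball 0 1) := by
  classical
  rw [closedBall_eq_iUnion_ball_residueLift,
    measure_iUnion pairwise_disjoint_ball_residueLift fun _ => Metric.isOpen_ball.measurableSet,
    tsum_fintype]
  simp [Measure.addHaar_ball_center μ (residueLift _)]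

theorem map_prime_smul_addHaar :
    μ.map ((p : ℚ_[p]) • ·) = (p : ENNReal) ^ Fintype.card ι • μ := by
  have hp : (p : ℚ_[p]) ≠ 0 := by exact_mod_cast (Fact.out : p.Prime).ne_zero
  have hmap : (μ.map ((p : ℚ_[p]) • ·)).IsAddHaarMeasure :=
    (ContinuousLinearEquiv.smulLeft (R₁ := ℚ_[p]) (Units.mk0 (p : ℚ_[p]) hp)).isAddHaarMeasure_map μ
  have hpreimage : ((p : ℚ_[p]) • ·) ⁻¹' Metric.ball (0 : ι → ℚ_[p]) 1 = Metric.closedBall 0 1 := by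
    ext y
    simpa using add_prime_smul_mem_ball_iff (v := 0) (y := y)
  have hunique := Measure.isAddLeftInvariant_eq_smul (μ.map ((p : ℚ_[p]) • ·)) μ
  have hball := congrArg (fun ν => ν (Metric.ball 0 1)) hunique
  simp only [Measure.smul_apply] at hball
  rw [Measure.map_apply (measurable_const_smul _) Metric.isOpen_ball.measurableSet, hpreimage,
    addHaar_closedBall_one_eq_mul_ball_one, ENNReal.smul_def, smul_eq_mul,
    ENNReal.mul_left_inj (Metric.measure_ball_pos μ 0 one_pos).ne' measure_ball_lt_top.ne] at hball
  rw [hunique, hball, ENNReal.smul_def]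

theorem setIntegral_eq_smul_setIntegral_add_prime_smul {E : Type*} [NormedAddCommGroup E]
    [NormedSpace ℝ E] (v : ι → ℚ_[p]) (S : Set (ι → ℚ_[p])) (f : (ι → ℚ_[p]) → E) :
    ∫ x in S, f x ∂μ = ((p : ℝ) ^ Fintype.card ι)⁻¹ •
      ∫ y in (fun y => v + (p : ℚ_[p]) • y) ⁻¹' S, f (v + (p : ℚ_[p]) • y) ∂μ := by
  have hp : (p : ℚ_[p]) ≠ 0 := by exact_mod_cast (Fact.out : p.Prime).ne_zero
  have hp' : (p : ℝ) ≠ 0 := by exact_mod_cast (Fact.out : p.Prime).ne_zero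
  let T : (ι → ℚ_[p]) ≃ₜ (ι → ℚ_[p]) :=
    (Homeomorph.smulOfNeZero (p : ℚ_[p]) hp).trans (Homeomorph.addLeft v)
  have hT : μ.map T = (p : ENNReal) ^ Fintype.card ι • μ := by
    rw [← map_add_left_eq_self (_ • μ) v, ← map_prime_smul_addHaar,
      Measure.map_map (measurable_const_add v) (measurable_const_smul _)]
    rfl
  have hsubst := T.measurableEmbedding.setIntegral_map (μ := μ) f S
  rw [hT, Measure.restrict_smul, integral_smul_measure, ENNReal.toReal_pow,
    ENNReal.toReal_natCast] at hsubst
  rw [← inv_smul_smul₀ (pow_ne_zero _ hp') (∫ x in S, f x ∂μ), hsubst]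
  rfl

end Haar

section UnitPolydisc

variable (p : ℕ) [Fact p.Prime]

instance (ι : Type) [Fintype ι] : (padicPi p ι).IsAddHaarMeasure := by
  unfold padicPi padicHaar; infer_instance

theorem padicHaar_closedBall : padicHaar p (Metric.closedBall 0 1) = 1 :=
  Measure.addHaarMeasure_self

theorem restrict_padicPi_closedBall (ι : Type) [Fintype ι] :
    (padicPi p ι).restrict (Metric.closedBall 0 1) =
      Measure.pi fun _ => (padicHaar p).restrict (Metric.closedBall 0 1) := by
  rw [padicPi, ← Measure.restrict_pi_pi, closedBall_pi _ zero_le_one]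
  rfl

theorem padicPi_closedBall (ι : Type) [Fintype ι] :
    padicPi p ι (Metric.closedBall 0 1) = 1 := by
  rw [← Measure.restrict_apply_univ, restrict_padicPi_closedBall]
  simp [Measure.pi_univ, padicHaar_closedBall]

theorem map_restrict₂_restrict_padicPi_closedBall {A B : Finset ℕ} (hBA : B ⊆ A) :
    ((padicPi p A).restrict (Metric.closedBall 0 1)).map
        (Finset.restrict₂ (π := fun _ => ℚ_[p]) hBA) =
      (padicPi p B).restrict (Metric.closedBall 0 1) := by
  have : IsProbabilityMeasure ((padicHaar p).restrict (Metric.closedBall 0 1)) :=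
    ⟨by rw [Measure.restrict_apply_univ, padicHaar_closedBall]⟩
  rw [restrict_padicPi_closedBall, restrict_padicPi_closedBall]
  exact (isProjectiveMeasureFamily_pi
    (fun _ : ℕ => (padicHaar p).restrict (Metric.closedBall 0 1)) A B hBA).symm

end UnitPolydisc

section KobaNielsen

variable {p : ℕ} [Fact p.Prime] {s : ℕ → ℕ → ℂ} {A B : Finset ℕ} {K : Finset (ℕ × ℕ)}

/-- The Koba–Nielsen factor `∏_{(i,j) ∈ K} |x_i - x_j|^{s_{ij}}`, the integrand of `L₀` and
`L₁`. -/
def kobaNielsen (s : ℕ → ℕ → ℂ) (K : Finset (ℕ × ℕ)) (x : A → ℚ_[p]) : ℂ :=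
  ∏ q ∈ K, (‖padicCoord x q.1 - padicCoord x q.2‖ : ℂ) ^ s q.1 q.2

/-- The complement in `ℚ_p^A` of the zero loci of the differences `x_i - x_j` with
`(i,j) ∈ K`. -/
def distinctLocus (p : ℕ) [Fact p.Prime] (A : Finset ℕ) (K : Finset (ℕ × ℕ)) :
    Set (A → ℚ_[p]) :=
  {x | ∀ q ∈ K, padicCoord x q.1 ≠ padicCoord x q.2}

theorem padicCoord_of_mem (x : A → ℚ_[p]) {n : ℕ} (h : n ∈ A) : padicCoord x n = x ⟨n, h⟩ :=
  dif_pos h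

theorem continuous_padicCoord (n : ℕ) : Continuous fun x : A → ℚ_[p] => padicCoord x n := by
  unfold padicCoord
  split_ifs <;> fun_prop

theorem norm_padicCoord_le (x : A → ℚ_[p]) (n : ℕ) : ‖padicCoord x n‖ ≤ ‖x‖ := by
  unfold padicCoord
  split_ifs with h
  · exact norm_le_pi_norm x _
  · simp

theorem measurable_kobaNielsen : Measurable (kobaNielsen (p := p) (A := A) s K) :=
  Finset.measurable_fun_prod _ fun q _ =>
    (Complex.measurable_ofReal.comp
      ((continuous_padicCoord q.1).sub (continuous_padicCoord q.2)).norm.measurable).pow_const _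

theorem measurableSet_distinctLocus : MeasurableSet (distinctLocus p A K) := by
  simp only [distinctLocus, Set.ofPred_forall]
  exact Finset.measurableSet_biInter K fun q _ =>
    (isOpen_ne_fun (continuous_padicCoord q.1) (continuous_padicCoord q.2)).measurableSet

theorem L1val_eq_setIntegral_kobaNielsen :
    L1val p s A K =
      ∫ x in Metric.closedBall 0 1 ∩ distinctLocus p A K, kobaNielsen s K x ∂padicPi p A := by
  have hball : Metric.closedBall (0 : A → ℚ_[p]) 1 = {x | ∀ i, ‖x i‖ ≤ 1} := by
    ext x
    simp [pi_norm_le_iff_of_nonneg]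
  rw [hball]
  rfl

theorem L1val_empty : L1val p s A ∅ = 1 := by
  simp [L1val_eq_setIntegral_kobaNielsen, distinctLocus, kobaNielsen, measureReal_def,
    padicPi_closedBall]

theorem padicCoord_restrict₂ (hBA : B ⊆ A) (x : A → ℚ_[p]) {n : ℕ} (hn : n ∈ B) :
    padicCoord (Finset.restrict₂ (π := fun _ => ℚ_[p]) hBA x) n = padicCoord x n := by
  rw [padicCoord_of_mem _ hn, padicCoord_of_mem _ (hBA hn)]
  rfl

theorem fst_mem_Klist {q : ℕ × ℕ} (hq : q ∈ K) : q.1 ∈ Klist K :=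
  mem_union_left _ (mem_image_of_mem _ hq)

theorem snd_mem_Klist {q : ℕ × ℕ} (hq : q ∈ K) : q.2 ∈ Klist K :=
  mem_union_right _ (mem_image_of_mem _ hq)

theorem L1val_eq_L1val_Klist (hKA : Klist K ⊆ A) : L1val p s A K = L1val p s (Klist K) K := by
  let r : (A → ℚ_[p]) → (Klist K → ℚ_[p]) := Finset.restrict₂ (π := fun _ => ℚ_[p]) hKA
  have hr : Measurable r := Finset.measurable_restrict₂ (X := fun _ => ℚ_[p]) hKA
  have hcoord₁ (x : A → ℚ_[p]) {q : ℕ × ℕ} (hq : q ∈ K) : padicCoord (r x) q.1 = padicCoord x q.1 :=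
    padicCoord_restrict₂ hKA x (fst_mem_Klist hq)
  have hcoord₂ (x : A → ℚ_[p]) {q : ℕ × ℕ} (hq : q ∈ K) : padicCoord (r x) q.2 = padicCoord x q.2 :=
    padicCoord_restrict₂ hKA x (snd_mem_Klist hq)
  have hlocus : r ⁻¹' distinctLocus p (Klist K) K = distinctLocus p A K := by
    ext x
    exact forall₂_congr fun q hq => by rw [hcoord₁ x hq, hcoord₂ x hq]
  have hfactor (x : A → ℚ_[p]) : kobaNielsen s K (r x) = kobaNielsen s K x :=
    prod_congr rfl fun q hq => by rw [hcoord₁ x hq, hcoord₂ x hq]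
  simp only [L1val_eq_setIntegral_kobaNielsen, Set.inter_comm (Metric.closedBall _ _),
    ← Measure.restrict_restrict measurableSet_distinctLocus]
  rw [← map_restrict₂_restrict_padicPi_closedBall p hKA,
    setIntegral_map measurableSet_distinctLocus measurable_kobaNielsen.aestronglyMeasurable
      hr.aemeasurable]
  change _ = ∫ x in r ⁻¹' _, kobaNielsen s K (r x) ∂_
  simp only [hlocus, hfactor]

theorem norm_kobaNielsen_le_one (hs : ∀ q ∈ K, 0 ≤ (s q.1 q.2).re) {x : A → ℚ_[p]}
    (hx : x ∈ Metric.closedBall 0 1 ∩ distinctLocus p A K) : ‖kobaNielsen s K x‖ ≤ 1 := by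
  have hcoord (n : ℕ) : ‖padicCoord x n‖ ≤ 1 :=
    (norm_padicCoord_le x n).trans (mem_closedBall_zero_iff.mp hx.1)
  rw [kobaNielsen, norm_prod]
  refine prod_le_one (fun _ _ => norm_nonneg _) fun q hq => ?_
  rw [Complex.norm_cpow_eq_rpow_re_of_pos (norm_sub_pos_iff.mpr (hx.2 q hq))]
  refine Real.rpow_le_one (norm_nonneg _) ?_ (hs q hq)
  rw [sub_eq_add_neg]
  refine (IsUltrametricDist.norm_add_le_max _ _).trans (max_le (hcoord _) ?_)
  exact (norm_neg _).trans_le (hcoord _)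

theorem integrableOn_kobaNielsen (hs : ∀ q ∈ K, 0 ≤ (s q.1 q.2).re) :
    IntegrableOn (kobaNielsen s K) (Metric.closedBall 0 1 ∩ distinctLocus p A K)
      (padicPi p A) := by
  refine IntegrableOn.of_bound ?_ measurable_kobaNielsen.aestronglyMeasurable 1 ?_
  · exact (measure_mono Set.inter_subset_left).trans_lt measure_closedBall_lt_top
  · filter_upwards [ae_restrict_mem
      (Metric.isClosed_closedBall.measurableSet.inter measurableSet_distinctLocus)] with x hx
    exact norm_kobaNielsen_le_one hs hx

end KobaNielsen

section Decomposition

variable {p : ℕ} {J : Finset ℕ}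

theorem mem_pairsIn {q : ℕ × ℕ} : q ∈ pairsIn J ↔ (q.1 ∈ J ∧ q.2 ∈ J) ∧ q.1 < q.2 := by
  simp [pairsIn]

theorem mem_KofV {b : J → ZMod p} {q : ℕ × ℕ} (h₁ : q.1 ∈ J) (h₂ : q.2 ∈ J) :
    q ∈ KofV p J b ↔ q ∈ pairsIn J ∧ b ⟨q.1, h₁⟩ = b ⟨q.2, h₂⟩ := by
  simp [KofV, h₁, h₂]

theorem KofV_subset (b : J → ZMod p) : KofV p J b ⊆ pairsIn J := filter_subset _ _

theorem Klist_KofV_subset (b : J → ZMod p) : Klist (KofV p J b) ⊆ J := by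
  refine union_subset (image_subset_iff.mpr fun q hq => ?_) (image_subset_iff.mpr fun q hq => ?_)
  · exact (mem_pairsIn.mp (KofV_subset b hq)).1.1
  · exact (mem_pairsIn.mp (KofV_subset b hq)).1.2

theorem KofV_eq_empty {b : J → ZMod p} (hb : Function.Injective b) : KofV p J b = ∅ := by
  refine eq_empty_of_forall_notMem fun q hq => ?_
  obtain ⟨⟨h₁, h₂⟩, hlt⟩ := mem_pairsIn.mp (KofV_subset b hq)
  exact hlt.ne (congrArg Subtype.val (hb ((mem_KofV h₁ h₂).mp hq).2))

variable [Fact p.Prime] {s : ℕ → ℕ → ℂ}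

theorem ofReal_norm_prime_mul_cpow (y : ℚ_[p]) (t : ℂ) :
    (‖(p : ℚ_[p]) * y‖ : ℂ) ^ t = (p : ℂ) ^ (-t) * (‖y‖ : ℂ) ^ t := by
  rw [norm_mul, Complex.ofReal_mul, Complex.mul_cpow_ofReal_nonneg (norm_nonneg _) (norm_nonneg _),
    Padic.norm_p, Complex.ofReal_inv, Complex.inv_cpow_ofReal_nonneg p.cast_nonneg,
    Complex.ofReal_natCast, Complex.cpow_neg]

theorem padicCoord_sub_residueLift_of_mem_KofV {b : J → ZMod p} {q : ℕ × ℕ}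
    (hq : q ∈ KofV p J b) (y : J → ℚ_[p]) :
    padicCoord (residueLift b + (p : ℚ_[p]) • y) q.1 -
        padicCoord (residueLift b + (p : ℚ_[p]) • y) q.2 =
      p * (padicCoord y q.1 - padicCoord y q.2) := by
  obtain ⟨⟨h₁, h₂⟩, -⟩ := mem_pairsIn.mp (KofV_subset b hq)
  have hb := ((mem_KofV h₁ h₂).mp hq).2
  simp only [padicCoord_of_mem _ h₁, padicCoord_of_mem _ h₂, Pi.add_apply, Pi.smul_apply,
    smul_eq_mul, residueLift, hb]
  ring

theorem norm_padicCoord_sub_eq_one_of_notMem_KofV {b : J → ZMod p} {x : J → ℚ_[p]}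
    (hx : x ∈ Metric.ball (residueLift b) 1) {q : ℕ × ℕ} (hq : q ∈ pairsIn J)
    (hqb : q ∉ KofV p J b) : ‖padicCoord x q.1 - padicCoord x q.2‖ = 1 := by
  obtain ⟨⟨h₁, h₂⟩, -⟩ := mem_pairsIn.mp hq
  have hne : b ⟨q.1, h₁⟩ ≠ b ⟨q.2, h₂⟩ := fun h => hqb ((mem_KofV h₁ h₂).mpr ⟨hq, h⟩)
  rw [padicCoord_of_mem _ h₁, padicCoord_of_mem _ h₂]
  exact norm_sub_eq_one_of_mem_ball_val hne (mem_ball_residueLift.mp hx _)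
    (mem_ball_residueLift.mp hx _)

theorem preimage_ball_inter_distinctLocus (b : J → ZMod p) :
    (fun y => residueLift b + (p : ℚ_[p]) • y) ⁻¹'
        (Metric.ball (residueLift b) 1 ∩ distinctLocus p J (pairsIn J)) =
      Metric.closedBall 0 1 ∩ distinctLocus p J (KofV p J b) := by
  have hp : (p : ℚ_[p]) ≠ 0 := by exact_mod_cast (Fact.out : p.Prime).ne_zero
  ext y
  rw [Set.mem_preimage, Set.mem_inter_iff, Set.mem_inter_iff, add_prime_smul_mem_ball_iff]
  refine and_congr_right fun hy => ?_
  have hmem_iff {q : ℕ × ℕ} (hq : q ∈ KofV p J b) :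
      padicCoord (residueLift b + (p : ℚ_[p]) • y) q.1 ≠
        padicCoord (residueLift b + (p : ℚ_[p]) • y) q.2 ↔ padicCoord y q.1 ≠ padicCoord y q.2 := by
    rw [← sub_ne_zero, padicCoord_sub_residueLift_of_mem_KofV hq, mul_ne_zero_iff, sub_ne_zero,
      and_iff_right hp]
  refine ⟨fun h q hq => (hmem_iff hq).mp (h q (KofV_subset b hq)), fun h q hq => ?_⟩
  by_cases hqb : q ∈ KofV p J b
  · exact (hmem_iff hqb).mpr (h q hqb)
  · rw [← sub_ne_zero, ← norm_ne_zero_iff, norm_padicCoord_sub_eq_one_of_notMem_KofV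
      (add_prime_smul_mem_ball_iff.mpr hy) hq hqb]
    exact one_ne_zero

theorem kobaNielsen_residueLift_add_prime_smul (b : J → ZMod p) {y : J → ℚ_[p]}
    (hy : y ∈ Metric.closedBall 0 1) :
    kobaNielsen s (pairsIn J) (residueLift b + (p : ℚ_[p]) • y) =
      (p : ℂ) ^ (-∑ q ∈ KofV p J b, s q.1 q.2) * kobaNielsen s (KofV p J b) y := by
  have hp : (p : ℂ) ≠ 0 := by exact_mod_cast (Fact.out : p.Prime).ne_zero
  have hpow : (p : ℂ) ^ (-∑ q ∈ KofV p J b, s q.1 q.2) =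
      ∏ q ∈ KofV p J b, (p : ℂ) ^ (-s q.1 q.2) := by
    simp only [Complex.cpow_def_of_ne_zero hp, ← Complex.exp_sum, ← mul_sum, sum_neg_distrib]
  rw [hpow, kobaNielsen, kobaNielsen, ← prod_mul_distrib, ← prod_subset (KofV_subset b)]
  · refine prod_congr rfl fun q hq => ?_
    rw [padicCoord_sub_residueLift_of_mem_KofV hq, ofReal_norm_prime_mul_cpow]
  · intro q hq hqb
    rw [norm_padicCoord_sub_eq_one_of_notMem_KofV (add_prime_smul_mem_ball_iff.mpr hy) hq hqb,
      Complex.ofReal_one, Complex.one_cpow]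

theorem setIntegral_ball_residueLift_kobaNielsen (b : J → ZMod p) :
    ∫ x in Metric.ball (residueLift b) 1 ∩ distinctLocus p J (pairsIn J),
        kobaNielsen s (pairsIn J) x ∂padicPi p J =
      (p : ℂ) ^ (-(#J : ℂ) - ∑ q ∈ KofV p J b, s q.1 q.2) *
        L1val p s (Klist (KofV p J b)) (KofV p J b) := by
  have hp : (p : ℂ) ≠ 0 := by exact_mod_cast (Fact.out : p.Prime).ne_zero
  have hmeas : MeasurableSet (Metric.closedBall 0 1 ∩ distinctLocus p J (KofV p J b)) :=
    Metric.isClosed_closedBall.measurableSet.inter measurableSet_distinctLocus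
  have hpow : (p : ℂ) ^ (-(#J : ℂ) - ∑ q ∈ KofV p J b, s q.1 q.2) =
      (((p : ℝ) ^ #J)⁻¹ : ℝ) * (p : ℂ) ^ (-∑ q ∈ KofV p J b, s q.1 q.2) := by
    rw [sub_eq_add_neg, Complex.cpow_add _ _ hp, Complex.cpow_neg _ (#J : ℂ), Complex.cpow_natCast]
    push_cast
    rfl
  rw [setIntegral_eq_smul_setIntegral_add_prime_smul _ (residueLift b),
    preimage_ball_inter_distinctLocus, setIntegral_congr_fun hmeas fun y hy =>
      kobaNielsen_residueLift_add_prime_smul b hy.1,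
    integral_const_mul, ← L1val_eq_setIntegral_kobaNielsen,
    L1val_eq_L1val_Klist (Klist_KofV_subset b), hpow, Fintype.card_coe, Complex.real_smul,
    mul_assoc]

theorem L0val_eq_sum_residues
    (hintegrable : IntegrableOn (kobaNielsen s (pairsIn J))
      (unitTorus p J ∩ distinctLocus p J (pairsIn J)) (padicPi p J)) :
    L0val p s J = ∑ b : J → ZMod p with ∀ i, b i ≠ 0,
      (p : ℂ) ^ (-(#J : ℂ) - ∑ q ∈ KofV p J b, s q.1 q.2) *
        L1val p s (Klist (KofV p J b)) (KofV p J b) := by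
  have hcover := congrArg (· ∩ distinctLocus p J (pairsIn J))
    (unitTorus_eq_biUnion_ball_residueLift (p := p) (ι := J))
  simp only [Set.iUnion₂_inter] at hcover
  change ∫ x in unitTorus p J ∩ distinctLocus p J (pairsIn J),
    kobaNielsen s (pairsIn J) x ∂padicPi p J = _
  rw [hcover] at hintegrable ⊢
  rw [integral_biUnion_finset]
  · exact sum_congr rfl fun b _ => setIntegral_ball_residueLift_kobaNielsen b
  · exact fun b _ => Metric.isOpen_ball.measurableSet.inter measurableSet_distinctLocus
  · exact fun a _ b _ hab => (pairwise_disjoint_ball_residueLift hab).mono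
      Set.inter_subset_left Set.inter_subset_left
  · exact fun b hb => hintegrable.mono_set (Set.subset_biUnion_of_mem (u := fun b =>
      Metric.ball (residueLift b) 1 ∩ distinctLocus p J (pairsIn J)) hb)

theorem L0_formula_general
    (hintegrable : IntegrableOn (kobaNielsen s (pairsIn J))
      (unitTorus p J ∩ distinctLocus p J (pairsIn J)) (padicPi p J))
    {R : Finset (J → ZMod p)} (hR1 : ∀ r ∈ R, (∀ i, r i ≠ 0) ∧ ¬ Function.Injective r)
    (hR2 : ∀ b : J → ZMod p, ((∀ i, b i ≠ 0) ∧ ¬ Function.Injective b) →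
      ∃! r, r ∈ R ∧ KofV p J r = KofV p J b) :
    L0val p s J =
      (∑ a ∈ R,
        ({b : J → ZMod p | ((∀ i, b i ≠ 0) ∧ ¬ Function.Injective b) ∧
            KofV p J b = KofV p J a}.ncard : ℂ) *
          (p : ℂ) ^ (-(#J : ℂ) - ∑ q ∈ KofV p J a, s q.1 q.2) *
          L1val p s (Klist (KofV p J a)) (KofV p J a)) +
      ({b : J → ZMod p | (∀ i, b i ≠ 0) ∧ Function.Injective b}.ncard : ℂ) *
        (p : ℂ) ^ (-(#J : ℂ)) := by
  classical
  let g (K : Finset (ℕ × ℕ)) : ℂ :=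
    (p : ℂ) ^ (-(#J : ℂ) - ∑ q ∈ K, s q.1 q.2) * L1val p s (Klist K) K
  have hg_injective : ∀ b ∈ ({b | (∀ i, b i ≠ 0) ∧ Function.Injective b} : Finset (J → ZMod p)),
      g (KofV p J b) = (p : ℂ) ^ (-(#J : ℂ)) := fun b hb => by
    simp [g, KofV_eq_empty (mem_filter.mp hb).2.2, L1val_empty]
  have hgroup := sum_comp_eq_sum_representatives (k := KofV p J)
    (S := {b | (∀ i, b i ≠ 0) ∧ ¬ Function.Injective b}) (fun r hr => by simpa using hR1 r hr)
    (fun b hb => hR2 b (by simpa using hb)) g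
  rw [L0val_eq_sum_residues hintegrable, ← sum_filter_not_add_sum_filter _ Function.Injective,
    filter_filter, filter_filter, hgroup, sum_congr rfl hg_injective]
  simp [g, mul_assoc, filter_filter, ← Set.ncard_coe_finset]

end Decomposition

/-- Lemma: `L₀(s;J) = Σ_{ā ∈ R(J)} |Ā(ā)| p^{-|J| - Σ_{K(ā)} s_{ij}} L₁(s; K_list(ā), K(ā))
 + |Δ̄(J)| p^{-|J|}`, for any system `R(J)` of representatives of the classes of the
relation `ā ∼ b̄ ↔ K(ā) = K(b̄)` on `(𝔽_p^×)^{|J|} ∖ Δ̄(J)`. -/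
theorem L0_formula (p : ℕ) [Fact p.Prime] (N : ℕ) (hN : 4 ≤ N)
    (J : Finset ℕ) (hJT : J ⊆ Tset N) (hJ2 : 2 ≤ J.card)
    (s : ℕ → ℕ → ℂ) (hs : ∀ q ∈ pairsIn J, 0 < (s q.1 q.2).re)
    (R : Finset (↥J → ZMod p))
    (hR1 : ∀ r ∈ R, (∀ i, r i ≠ 0) ∧ ¬ Function.Injective r)
    (hR2 : ∀ b : ↥J → ZMod p, ((∀ i, b i ≠ 0) ∧ ¬ Function.Injective b) →
      ∃! r, r ∈ R ∧ KofV p J r = KofV p J b) :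
    L0val p s J =
      (∑ a ∈ R,
        ({b : ↥J → ZMod p | ((∀ i, b i ≠ 0) ∧ ¬ Function.Injective b) ∧
            KofV p J b = KofV p J a}.ncard : ℂ) *
          (p : ℂ) ^ (-(J.card : ℂ) - ∑ q ∈ KofV p J a, s q.1 q.2) *
          L1val p s (Klist (KofV p J a)) (KofV p J a)) +
      ({b : ↥J → ZMod p | (∀ i, b i ≠ 0) ∧ Function.Injective b}.ncard : ℂ) *
        (p : ℂ) ^ (-(J.card : ℂ)) :=
  L0_formula_general ((integrableOn_kobaNielsen fun q hq => (hs q hq).le).mono_set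
    (Set.inter_subset_inter_left _ unitTorus_subset_closedBall)) hR1 hR2
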